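/- In any principal–agent instance with n := |A| actions, there exists a menu Π* of deterministic contracts of size n such that R(Π*) ≤ R(Π) for every menu Π of deterministic contracts of any finite size K ≥ 1; in particular, a regret-minimizing menu of deterministic contracts exists. -/

import Mathlib

open Finset

variable {A Ω : Type} [Fintype A] [Fintype Ω] [Nonempty A] [Nonempty Ω]

/-- Agent's expected utility `U^a(p,c,a)` of action `a` under contract `p` and costs `c`. -/
noncomputable def Uag (F : A → Ω → ℝ) (p : Ω → ℝ) (c : A → ℝ) (a : A) : ℝ :=
  (∑ ω, F a ω * p ω) - c a

/-- Principal's expected utility when the agent plays action `a` under contract `p`. -/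
noncomputable def prinAct (F : A → Ω → ℝ) (r p : Ω → ℝ) (a : A) : ℝ :=
  ∑ ω, F a ω * (r ω - p ω)

/-- Principal's expected utility `U^p(p,c)`: the agent plays a best response,
with ties among best responses broken in favor of the principal. -/
noncomputable def Uprin (F : A → Ω → ℝ) (r p : Ω → ℝ) (c : A → ℝ) : ℝ :=
  sSup { x | ∃ a : A, (∀ a' : A, Uag F p c a' ≤ Uag F p c a) ∧ x = prinAct F r p a }

/-- A deterministic contract: nonnegative payments. -/
def IsContract (p : Ω → ℝ) : Prop := ∀ ω, 0 ≤ p ω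

/-- `OPT(c)`: the supremum over contracts of the principal's expected utility against `c`. -/
noncomputable def OPT (F : A → Ω → ℝ) (r : Ω → ℝ) (c : A → ℝ) : ℝ :=
  sSup { x | ∃ p : Ω → ℝ, IsContract p ∧ x = Uprin F r p c }

/-- The regret `R(p)` of a deterministic contract `p`. -/
noncomputable def regret (F : A → Ω → ℝ) (r : Ω → ℝ) (C : Set (A → ℝ)) (p : Ω → ℝ) : ℝ :=
  sSup { x | ∃ c ∈ C, x = OPT F r c - Uprin F r p c }

/-- Uncertainty level `d(C)`: the L∞-diameter of the uncertainty set. -/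
noncomputable def uncLevel (C : Set (A → ℝ)) : ℝ :=
  sSup { x | ∃ c ∈ C, ∃ c' ∈ C, x = ‖c - c'‖ }

/-- The assumptions defining a principal–agent instance `(A, Ω, r, C, F)`. -/
structure IsPAInstance (F : A → Ω → ℝ) (r : Ω → ℝ) (C : Set (A → ℝ)) : Prop where
  r_mem : ∀ ω, r ω ∈ Set.Icc (0:ℝ) 1
  F_mem : ∀ a ω, F a ω ∈ Set.Icc (0:ℝ) 1
  F_sum : ∀ a, ∑ ω, F a ω = 1
  C_nonempty : C.Nonempty
  C_mem : ∀ c ∈ C, ∀ a, c a ∈ Set.Icc (0:ℝ) 1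
  zero_action : ∃ a : A, ∀ c ∈ C, c a = 0

/-- The agent's best-response utility under contract `p`. -/
noncomputable def agentBest (F : A → Ω → ℝ) (p : Ω → ℝ) (c : A → ℝ) : ℝ :=
  ⨆ a : A, Uag F p c a

/-- Principal's expected utility `U^p(Π,c)` under a menu of deterministic contracts:
the agent selects an element maximizing its own utility, breaking ties in favor of
the principal. -/
noncomputable def UprinMenu (F : A → Ω → ℝ) (r : Ω → ℝ) {K : ℕ} (m : Fin K → Ω → ℝ)
    (c : A → ℝ) : ℝ :=
  sSup { x | ∃ i : Fin K, (∀ j : Fin K, agentBest F (m j) c ≤ agentBest F (m i) c) ∧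
    x = Uprin F r (m i) c }

/-- The regret `R(Π)` of a menu of deterministic contracts. -/
noncomputable def regretMenu (F : A → Ω → ℝ) (r : Ω → ℝ) (C : Set (A → ℝ)) {K : ℕ}
    (m : Fin K → Ω → ℝ) : ℝ :=
  sSup { x | ∃ c ∈ C, x = OPT F r c - UprinMenu F r m c }

theorem fin_sSup {S : Set ℝ} (hf : S.Finite) (hn : S.Nonempty) :
    sSup S ∈ S ∧ ∀ x ∈ S, x ≤ sSup S :=
  ⟨hn.csSup_mem hf, fun _ hx => le_csSup hf.bddAbove hx⟩

theorem fin_set {ι : Type} [Finite ι] (P : ι → Prop) (f : ι → ℝ) :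
    {x | ∃ a, P a ∧ x = f a}.Finite := by
  refine (Set.finite_range f).subset ?_
  rintro x ⟨a, _, rfl⟩
  exact ⟨a, rfl⟩

/-- greatest value among maximizers of `g` -/
theorem max_spec {ι : Type} [Finite ι] [Nonempty ι] (g f : ι → ℝ) :
    (∃ a, (∀ a', g a' ≤ g a) ∧
      sSup {x | ∃ a, (∀ a', g a' ≤ g a) ∧ x = f a} = f a) ∧
    ∀ a, (∀ a', g a' ≤ g a) → f a ≤ sSup {x | ∃ a, (∀ a', g a' ≤ g a) ∧ x = f a} := by
  have hn : {x | ∃ a, (∀ a', g a' ≤ g a) ∧ x = f a}.Nonempty := by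
    obtain ⟨a, ha⟩ := Finite.exists_max g
    exact ⟨f a, a, ha, rfl⟩
  obtain ⟨h1, h2⟩ := fin_sSup (fin_set (fun a => ∀ a', g a' ≤ g a) f) hn
  exact ⟨h1, fun a ha => h2 _ ⟨a, ha, rfl⟩⟩

/-- expected payment -/
noncomputable def pay {A Ω : Type} [Fintype Ω] (F : A → Ω → ℝ) (p : Ω → ℝ) (a : A) : ℝ :=
  ∑ ω, F a ω * p ω

/-- principal's value as a function of the payment profile -/
noncomputable def Wv {A Ω : Type} [Fintype Ω] (F : A → Ω → ℝ) (r : Ω → ℝ) (v c : A → ℝ) : ℝ :=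
  sSup {x | ∃ a : A, (∀ a' : A, v a' - c a' ≤ v a - c a) ∧ x = pay F r a - v a}

/-- `v` is the payment profile of the menu `m` -/
def IsV {A Ω ι : Type} [Fintype Ω] (F : A → Ω → ℝ) (m : ι → Ω → ℝ) (v : A → ℝ) : Prop :=
  ∀ a, (∃ i, v a = pay F (m i) a) ∧ ∀ i, pay F (m i) a ≤ v a

theorem prinAct_eq' {A Ω : Type} [Fintype Ω] (F : A → Ω → ℝ) (r p : Ω → ℝ) (a : A) :
    prinAct F r p a = pay F r a - pay F p a := by
  simp [prinAct, pay, mul_sub, Finset.sum_sub_distrib]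

theorem menu_eq {A Ω : Type} [Fintype A] [Fintype Ω] [Nonempty A]
    (F : A → Ω → ℝ) (r : Ω → ℝ) {K : ℕ} (hK : 0 < K) (m : Fin K → Ω → ℝ) (v c : A → ℝ)
    (hv : IsV F m v) : UprinMenu F r m c = Wv F r v c := by
  have : Nonempty (Fin K) := ⟨⟨0, hK⟩⟩
  have hag : ∀ i a, Uag F (m i) c a = pay F (m i) a - c a := fun i a => rfl
  have hle : ∀ i a, Uag F (m i) c a ≤ agentBest F (m i) c := fun i a =>
    le_ciSup (f := fun a => Uag F (m i) c a) (Set.finite_range _).bddAbove a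
  have hble : ∀ i x, (∀ a, Uag F (m i) c a ≤ x) → agentBest F (m i) c ≤ x := fun i x h =>
    ciSup_le h
  obtain ⟨⟨i, hi, hie⟩, hM⟩ := max_spec (fun i => agentBest F (m i) c) (fun i => Uprin F r (m i) c)
  obtain ⟨⟨a, ha, hae⟩, hW⟩ := max_spec (fun a => v a - c a) (fun a => pay F r a - v a)
  apply le_antisymm
  · unfold UprinMenu
    rw [hie]
    obtain ⟨⟨b, hb, hbe⟩, -⟩ := max_spec (fun a => Uag F (m i) c a) (fun a => prinAct F r (m i) a)
    unfold Uprin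
    rw [hbe]
    try simp only at hb hi
    have hbb : agentBest F (m i) c ≤ Uag F (m i) c b := hble _ _ hb
    have hvb : v b = pay F (m i) b := by
      apply le_antisymm _ ((hv b).2 i)
      obtain ⟨j, hj⟩ := (hv b).1
      have := hle j b
      have := hi j
      rw [hag] at *
      linarith
    try simp only
    rw [prinAct_eq', ← hvb]
    apply hW
    intro a'
    obtain ⟨j, hj⟩ := (hv a').1
    have h1 := hle j a'
    have h2 := hi j
    rw [hag] at *
    try simp only
    linarith
  · unfold Wv
    rw [hae]
    try simp only at ha
    obtain ⟨i, hi⟩ := (hv a).1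
    refine le_trans ?_ (hM i ?_)
    · obtain ⟨-, h⟩ := max_spec (fun a => Uag F (m i) c a) (fun a => prinAct F r (m i) a)
      simp only [hi]
      rw [← prinAct_eq']
      apply h
      intro a'
      simp only [hag]
      have := (hv a').2 i
      have := ha a'
      linarith
    · intro j
      refine le_trans (hble j _ ?_) (hle i a)
      intro a'
      rw [hag, hag]
      have := (hv a').2 j
      have := ha a'
      linarith

theorem pay_bounds {A Ω : Type} [Fintype A] [Fintype Ω] [Nonempty A] [Nonempty Ω]
    {F : A → Ω → ℝ} {r : Ω → ℝ} {C : Set (A → ℝ)} (h : IsPAInstance F r C) (a : A) :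
    0 ≤ pay F r a ∧ pay F r a ≤ 1 := by
  constructor
  · exact Finset.sum_nonneg fun ω _ => mul_nonneg (h.F_mem a ω).1 (h.r_mem ω).1
  · rw [← h.F_sum a]
    exact Finset.sum_le_sum fun ω _ => mul_le_of_le_one_right (h.F_mem a ω).1 (h.r_mem ω).2

theorem OPT_bounds {A Ω : Type} [Fintype A] [Fintype Ω] [Nonempty A] [Nonempty Ω]
    {F : A → Ω → ℝ} {r : Ω → ℝ} {C : Set (A → ℝ)} (h : IsPAInstance F r C) (c : A → ℝ) :
    0 ≤ OPT F r c ∧ OPT F r c ≤ 1 := by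
  have hU : ∀ p, IsContract p → Uprin F r p c ≤ 1 := by
    intro p hp
    obtain ⟨⟨a, -, ha⟩, -⟩ := max_spec (fun a => Uag F p c a) (fun a => prinAct F r p a)
    unfold Uprin
    rw [ha]
    try simp only
    rw [prinAct_eq']
    have h1 : 0 ≤ pay F p a := Finset.sum_nonneg fun ω _ => mul_nonneg (h.F_mem a ω).1 (hp ω)
    have := (pay_bounds h a).2
    linarith
  have h0 : IsContract (fun _ : Ω => (0:ℝ)) := fun _ => le_rfl
  constructor
  · refine le_trans ?_ (le_csSup ⟨1, ?_⟩ ⟨_, h0, rfl⟩)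
    · obtain ⟨⟨a, -, ha⟩, -⟩ := max_spec (fun a => Uag F (fun _ => 0) c a)
        (fun a => prinAct F r (fun _ => 0) a)
      unfold Uprin
      rw [ha]
      try simp only
      rw [prinAct_eq']
      have := (pay_bounds h a).1
      simpa [pay] using this
    · rintro x ⟨p, hp, rfl⟩
      exact hU p hp
  · refine csSup_le ⟨_, _, h0, rfl⟩ ?_
    rintro x ⟨p, hp, rfl⟩
    exact hU p hp

/-- regret as a function of the payment profile -/
noncomputable def Reg {A Ω : Type} [Fintype A] [Fintype Ω] (F : A → Ω → ℝ) (r : Ω → ℝ)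
    (C : Set (A → ℝ)) (v : A → ℝ) : ℝ :=
  sSup {x | ∃ c ∈ C, x = OPT F r c - Wv F r v c}

theorem reg_eq {A Ω : Type} [Fintype A] [Fintype Ω] [Nonempty A]
    (F : A → Ω → ℝ) (r : Ω → ℝ) (C : Set (A → ℝ)) {K : ℕ} (hK : 0 < K) (m : Fin K → Ω → ℝ)
    (v : A → ℝ) (hv : IsV F m v) : regretMenu F r C m = Reg F r C v := by
  unfold regretMenu Reg
  simp only [menu_eq F r hK m v _ hv]

theorem reg_bdd {A Ω : Type} [Fintype A] [Fintype Ω] [Nonempty A] [Nonempty Ω]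
    {F : A → Ω → ℝ} {r : Ω → ℝ} {C : Set (A → ℝ)} (h : IsPAInstance F r C) (v : A → ℝ) :
    BddAbove {x | ∃ c ∈ C, x = OPT F r c - Wv F r v c} := by
  obtain ⟨b, hb⟩ := Finite.exists_max v
  refine ⟨1 + v b, ?_⟩
  rintro x ⟨c, -, rfl⟩
  obtain ⟨⟨a, -, ha⟩, -⟩ := max_spec (fun a => v a - c a) (fun a => pay F r a - v a)
  unfold Wv
  rw [ha]
  have := (OPT_bounds h c).2
  have := (pay_bounds h a).1
  have := hb a
  try simp only
  linarith

theorem reg_le_iff {A Ω : Type} [Fintype A] [Fintype Ω] [Nonempty A] [Nonempty Ω]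
    {F : A → Ω → ℝ} {r : Ω → ℝ} {C : Set (A → ℝ)} (h : IsPAInstance F r C) (v : A → ℝ) (y : ℝ) :
    Reg F r C v ≤ y ↔ ∀ c ∈ C, ∃ a, (∀ a', v a' - c a' ≤ v a - c a) ∧
      OPT F r c - (pay F r a - v a) ≤ y := by
  obtain ⟨c0, hc0⟩ := h.C_nonempty
  unfold Reg
  rw [csSup_le_iff (reg_bdd h v) ⟨_, c0, hc0, rfl⟩]
  constructor
  · intro H c hc
    obtain ⟨⟨a, ha, hae⟩, -⟩ := max_spec (fun a => v a - c a) (fun a => pay F r a - v a)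
    have := H _ ⟨c, hc, rfl⟩
    unfold Wv at this
    rw [hae] at this
    exact ⟨a, ha, this⟩
  · rintro H x ⟨c, hc, rfl⟩
    obtain ⟨a, ha, hy⟩ := H c hc
    have := (max_spec (fun a => v a - c a) (fun a => pay F r a - v a)).2 a ha
    unfold Wv
    try simp only at this
    linarith

theorem reg_lsc {A Ω : Type} [Fintype A] [Fintype Ω] [Nonempty A] [Nonempty Ω]
    {F : A → Ω → ℝ} {r : Ω → ℝ} {C : Set (A → ℝ)} (h : IsPAInstance F r C) :
    LowerSemicontinuous (Reg F r C) := by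
  rw [lowerSemicontinuous_iff_isClosed_preimage]
  intro y
  have : Reg F r C ⁻¹' Set.Iic y = ⋂ c ∈ C, ⋃ a, ((⋂ a', {v | v a' - c a' ≤ v a - c a}) ∩
      {v | OPT F r c - (pay F r a - v a) ≤ y}) := by
    ext v
    simp only [Set.mem_preimage, Set.mem_Iic, reg_le_iff h, Set.mem_iInter, Set.mem_iUnion,
      Set.mem_inter_iff, Set.mem_ofPred_eq]
  rw [this]
  refine isClosed_biInter fun c _ => isClosed_iUnion_of_finite fun a => IsClosed.inter
    (isClosed_iInter fun a' => isClosed_le (by fun_prop) (by fun_prop))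
    (isClosed_le (by fun_prop) (by fun_prop))

theorem exists_isV {A Ω : Type} [Fintype Ω] (F : A → Ω → ℝ) {K : ℕ} (hK : 0 < K)
    (m : Fin K → Ω → ℝ) : ∃ v, IsV F m v := by
  have : Nonempty (Fin K) := ⟨⟨0, hK⟩⟩
  choose i hi using fun a => Finite.exists_max (fun i => pay F (m i) a)
  exact ⟨fun a => pay F (m (i a)) a, fun a => ⟨⟨i a, rfl⟩, hi a⟩⟩

theorem isV_unique {A Ω ι : Type} [Fintype Ω] {F : A → Ω → ℝ} {m : ι → Ω → ℝ} {v w : A → ℝ}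
    (hv : IsV F m v) (hw : IsV F m w) : v = w := by
  funext a
  obtain ⟨i, hi⟩ := (hv a).1
  obtain ⟨j, hj⟩ := (hw a).1
  have := (hv a).2 j
  have := (hw a).2 i
  linarith

theorem reduce {A Ω : Type} [Fintype A] [Fintype Ω] [Nonempty A] [Nonempty Ω]
    {F : A → Ω → ℝ} {r : Ω → ℝ} {C : Set (A → ℝ)} (h : IsPAInstance F r C) {K : ℕ}
    (m : Fin K → Ω → ℝ) (hm : ∀ i, IsContract (m i)) (v : A → ℝ) (hv : IsV F m v)
    (h3 : ∀ a, v a ≤ 3) :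
    ∃ m' : Fin (Fintype.card A) → Ω → ℝ,
      m' ∈ Set.Icc (0 : Fin (Fintype.card A) → Ω → ℝ) (fun _ _ => ∑ b, ∑ ω, 3 / F b ω) ∧
      IsV F m' v := by
  classical
  let e := Fintype.equivFin A
  choose i hi using fun a => (hv a).1
  let T : (Ω → ℝ) → Ω → ℝ := fun p ω => if ∃ b, 0 < F b ω then p ω else 0
  have hT : ∀ p a, pay F (T p) a = pay F p a := by
    intro p a
    refine Finset.sum_congr rfl fun ω _ => ?_
    by_cases hb : ∃ b, 0 < F b ω
    · simp only [T, if_pos hb]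
    · have : F a ω = 0 := le_antisymm (not_lt.1 fun h' => hb ⟨a, h'⟩) (h.F_mem a ω).1
      simp [this]
  have hnn : ∀ b ω, 0 ≤ 3 / F b ω := fun b ω => div_nonneg (by norm_num) (h.F_mem b ω).1
  refine ⟨fun j => T (m (i (e.symm j))), ⟨?_, ?_⟩, ?_⟩
  · intro j ω
    simp only [T, Pi.zero_apply]
    split_ifs
    · exact hm _ ω
    · exact le_rfl
  · intro j ω
    simp only [T]
    split_ifs with hb
    · obtain ⟨b, hb⟩ := hb
      have h1 : F b ω * m (i (e.symm j)) ω ≤ pay F (m (i (e.symm j))) b :=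
        Finset.single_le_sum (f := fun ω => F b ω * m (i (e.symm j)) ω)
          (fun ω _ => mul_nonneg (h.F_mem b ω).1 (hm _ ω)) (Finset.mem_univ ω)
      have h2 := (hv b).2 (i (e.symm j))
      have h4 : m (i (e.symm j)) ω ≤ 3 / F b ω := by
        rw [le_div_iff₀ hb]
        linarith [h3 b]
      refine h4.trans ?_
      refine (Finset.single_le_sum (f := fun ω => 3 / F b ω) (fun ω _ => hnn b ω)
        (Finset.mem_univ ω)).trans ?_
      exact Finset.single_le_sum (f := fun b => ∑ ω, 3 / F b ω)
        (fun b _ => Finset.sum_nonneg fun ω _ => hnn b ω) (Finset.mem_univ b)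
    · exact Finset.sum_nonneg fun b _ => Finset.sum_nonneg fun ω _ => hnn b ω
  · intro a
    refine ⟨⟨e a, ?_⟩, fun j => ?_⟩
    · simp only [hT, Equiv.symm_apply_apply]
      exact hi a
    · simp only [hT]
      exact (hv a).2 _

/-- There exists a menu of deterministic contracts of size `n = |A|`
whose regret is at most the regret of every menu of deterministic contracts of any
finite size `K ≥ 1`; in particular a regret-minimizing menu exists. -/
theorem exists_regret_minimizing_menu
    {A Ω : Type} [Fintype A] [Fintype Ω] [Nonempty A] [Nonempty Ω]
    (F : A → Ω → ℝ) (r : Ω → ℝ) (C : Set (A → ℝ))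
    (hInst : IsPAInstance F r C) :
    ∃ mstar : Fin (Fintype.card A) → Ω → ℝ, (∀ i, IsContract (mstar i)) ∧
      ∀ (K : ℕ), 0 < K → ∀ m : Fin K → Ω → ℝ, (∀ i, IsContract (m i)) →
        regretMenu F r C mstar ≤ regretMenu F r C m := by
  classical
  have hn : 0 < Fintype.card A := Fintype.card_pos
  have : Nonempty (Fin (Fintype.card A)) := ⟨⟨0, hn⟩⟩
  let vm : (Fin (Fintype.card A) → Ω → ℝ) → A → ℝ := fun m a =>
    Finset.univ.sup' Finset.univ_nonempty (fun i => pay F (m i) a)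
  have hvm : ∀ m, IsV F m (vm m) := by
    intro m a
    constructor
    · obtain ⟨i, -, hi⟩ := Finset.exists_mem_eq_sup' Finset.univ_nonempty (fun i => pay F (m i) a)
      exact ⟨i, hi⟩
    · intro i
      exact Finset.le_sup' (fun i => pay F (m i) a) (Finset.mem_univ i)
  have hcont : Continuous vm := by
    refine continuous_pi fun a => ?_
    refine Continuous.finset_sup'_apply Finset.univ_nonempty fun i _ => ?_
    unfold pay
    fun_prop
  have hB : (0:ℝ) ≤ ∑ b, ∑ ω, 3 / F b ω := Finset.sum_nonneg fun b _ =>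
    Finset.sum_nonneg fun ω _ => div_nonneg (by norm_num) (hInst.F_mem b ω).1
  have hz : (0 : Fin (Fintype.card A) → Ω → ℝ) ∈
      Set.Icc (0 : Fin (Fintype.card A) → Ω → ℝ) (fun _ _ => ∑ b, ∑ ω, 3 / F b ω) :=
    ⟨le_rfl, fun _ _ => hB⟩
  have hlsc : LowerSemicontinuous (fun m => Reg F r C (vm m)) := (reg_lsc hInst).comp hcont
  obtain ⟨ms, hms, hmin⟩ := LowerSemicontinuousOn.exists_isMinOn ⟨_, hz⟩ isCompact_Icc
    (hlsc.lowerSemicontinuousOn _)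
  refine ⟨ms, fun i ω => hms.1 i ω, ?_⟩
  intro K hK m hm
  obtain ⟨v, hv⟩ := exists_isV F hK m
  rw [reg_eq F r C hn ms _ (hvm ms), reg_eq F r C hK m v hv]
  by_cases h3 : ∀ a, v a ≤ 3
  · obtain ⟨m', hm', hv'⟩ := reduce hInst m hm v hv h3
    rw [isV_unique hv' (hvm m')]
    exact hmin hm'
  · push Not at h3
    obtain ⟨b, hb⟩ := h3
    have h0 : Reg F r C (vm ms) ≤ Reg F r C (vm 0) := hmin hz
    have h1 : Reg F r C (vm 0) ≤ 1 := by
      rw [reg_le_iff hInst]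
      intro c hc
      obtain ⟨a, ha⟩ := Finite.exists_max (fun a => vm 0 a - c a)
      refine ⟨a, ha, ?_⟩
      obtain ⟨i, hi⟩ := (hvm 0 a).1
      have hi0 : vm 0 a = 0 := by rw [hi]; simp [pay]
      have := (OPT_bounds hInst c).2
      have := (pay_bounds hInst a).1
      linarith
    have h2 : 1 ≤ Reg F r C v := by
      obtain ⟨c, hc⟩ := hInst.C_nonempty
      obtain ⟨a, ha, hy⟩ := (reg_le_iff hInst v _).1 le_rfl c hc
      have := ha b
      have := (hInst.C_mem c hc b).2
      have := (hInst.C_mem c hc a).1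
      have := (OPT_bounds hInst c).1
      have := (pay_bounds hInst a).2
      linarith
    linarith
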